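/- arXiv:2011.10967 — 2 statements merged into one kernel-verified Lean document; each statement's English description precedes it below -/
import Mathlib

section
/- For every real p with 1 ≤ p < ∞ and every x with 0 ≤ x ≤ 1, the p-th power of the H^p(T^2) norm of z1 + x z2 equals the sum ∑_{j=0}^∞ binom(p/2, j)^2 x^{2j}, where binom(p/2, j) = (p/2)(p/2 - 1)⋯(p/2 - j + 1)/j! is the generalized binomial coefficient. Equivalently, (1/2π) ∫_0^{2π} (1 + 2x cos θ + x^2)^{p/2} dθ = ∑_{j=0}^∞ binom(p/2, j)^2 x^{2j}. -/
open scoped Real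

/-- The generalized binomial coefficient `r(r-1)⋯(r-j+1)/j!`. -/
noncomputable def gbinom (r : ℝ) (j : ℕ) : ℝ :=
  (∏ k ∈ Finset.range j, (r - k)) / (Nat.factorial j)

/-!
The number `(1 + 2 * x * cos θ + x ^ 2) ^ (p / 2)` is `‖1 + z‖ ^ p = ‖(1 + z) ^ (p / 2)‖ ^ 2` at
`z = x * exp (θ * I)`, so for `|x| < 1` the formula is Parseval's identity for the binomial series.
At `|x| = 1` it follows by letting the radius tend to `1`. The average of `‖1 + z‖ ^ p` is
continuous in the radius because `0 ≤ p`. The terms of the series are nonnegative, so these averages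
bound its partial sums; it therefore converges at radius `1`, and Abel's theorem identifies its sum.
-/

open Filter Topology Metric Real

lemma tendsto_circleAverage_of_norm_le {ι E : Type*} [NormedAddCommGroup E] [NormedSpace ℝ E]
    {l : Filter ι} [l.IsCountablyGenerated] {F : ι → ℂ → E} {f : ℂ → E} {c : ℂ} {r M : ℝ}
    (hF : ∀ᶠ n in l, CircleIntegrable (F n) c r)
    (hM : ∀ᶠ n in l, ∀ z ∈ sphere c |r|, ‖F n z‖ ≤ M)
    (hlim : ∀ z ∈ sphere c |r|, Tendsto (F · z) l (𝓝 (f z))) :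
    Tendsto (fun n ↦ circleAverage (F n) c r) l (𝓝 (circleAverage f c r)) := by
  refine (intervalIntegral.tendsto_integral_filter_of_dominated_convergence (fun _ ↦ M)
    ?_ ?_ intervalIntegrable_const ?_).const_smul _
  · exact hF.mono fun n hn ↦ (intervalIntegrable_iff.1 hn).aestronglyMeasurable
  · exact hM.mono fun n hn ↦ .of_forall fun θ _ ↦ hn _ (circleMap_mem_sphere' c r θ)
  · exact .of_forall fun θ _ ↦ hlim _ (circleMap_mem_sphere' c r θ)

lemma sum_sq_norm_mul_pow_eq_circleAverage (c : ℕ → ℂ) (r : ℝ) (n : ℕ) :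
    ∑ j ∈ Finset.range n, ‖c j‖ ^ 2 * r ^ (2 * j) =
      circleAverage (fun z ↦ ‖∑ j ∈ Finset.range n, c j * z ^ j‖ ^ 2) 0 r := by
  let P : Polynomial ℂ := ∑ j ∈ Finset.range n, .monomial j (c j * (r : ℂ) ^ j)
  have coeff_P (j : ℕ) : P.coeff j = if j < n then c j * (r : ℂ) ^ j else 0 := by
    simp [P, Polynomial.finsetSum_coeff, Polynomial.coeff_monomial]
  have eval_P (z : ℂ) : P.eval z = ∑ j ∈ Finset.range n, c j * (r * z) ^ j := by
    simp [P, Polynomial.eval_finsetSum, mul_pow, mul_assoc]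
  have support_P : P.support ⊆ Finset.range n := fun j hj ↦ by
    simp_all
  calc ∑ j ∈ Finset.range n, ‖c j‖ ^ 2 * r ^ (2 * j)
      = ∑ j ∈ Finset.range n, ‖P.coeff j‖ ^ 2 := Finset.sum_congr rfl fun j hj ↦ by
        rw [coeff_P, if_pos (Finset.mem_range.1 hj), norm_mul, norm_pow, Complex.norm_real,
          norm_eq_abs, mul_pow, ← pow_mul', pow_mul |r|, sq_abs, ← pow_mul]
    _ = ∑ j ∈ P.support, ‖P.coeff j‖ ^ 2 := by
        refine (Finset.sum_subset support_P fun j _ hj ↦ ?_).symm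
        simp [Polynomial.notMem_support_iff.1 hj]
    _ = circleAverage (fun z ↦ ‖P.eval z‖ ^ 2) 0 1 := P.sum_sq_norm_coeff_eq_circleAverage
    _ = circleAverage (fun z ↦ ‖∑ j ∈ Finset.range n, c j * z ^ j‖ ^ 2) 0 r := by
        simp only [eval_P]
        rw [circleAverage_eq_circleAverage_zero_one (R := r)]
        simp

lemma hasSum_sq_norm_mul_pow_circleAverage {c : ℕ → ℂ} {r : ℝ} {f : ℂ → ℂ}
    (hc : Summable fun j ↦ ‖c j‖ * |r| ^ j)
    (hf : ∀ z ∈ sphere (0 : ℂ) |r|, HasSum (fun j ↦ c j * z ^ j) (f z)) :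
    HasSum (fun j ↦ ‖c j‖ ^ 2 * r ^ (2 * j)) (circleAverage (fun z ↦ ‖f z‖ ^ 2) 0 r) := by
  have nonneg (j : ℕ) : 0 ≤ ‖c j‖ ^ 2 * r ^ (2 * j) :=
    mul_nonneg (sq_nonneg _) ((even_two_mul j).pow_nonneg r)
  rw [hasSum_iff_tendsto_nat_of_nonneg nonneg]
  simp only [sum_sq_norm_mul_pow_eq_circleAverage]
  have norm_partialSum_le (n : ℕ) (z : ℂ) (hz : z ∈ sphere 0 |r|) :
      ‖∑ j ∈ Finset.range n, c j * z ^ j‖ ≤ ∑' j, ‖c j‖ * |r| ^ j := by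
    calc ‖∑ j ∈ Finset.range n, c j * z ^ j‖
        ≤ ∑ j ∈ Finset.range n, ‖c j‖ * |r| ^ j :=
          norm_sum_le_of_le _ fun j _ ↦ by simp [mem_sphere_zero_iff_norm.1 hz]
      _ ≤ ∑' j, ‖c j‖ * |r| ^ j := hc.sum_le_tsum _ fun j _ ↦ by positivity
  refine tendsto_circleAverage_of_norm_le (M := (∑' j, ‖c j‖ * |r| ^ j) ^ 2)
    (.of_forall fun n ↦ ?_) (.of_forall fun n z hz ↦ ?_) fun z hz ↦ ?_
  · exact ContinuousOn.circleIntegrable' (by fun_prop)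
  · rw [norm_pow, norm_norm]
    gcongr
    exact norm_partialSum_le n z hz
  · exact ((hf z hz).tendsto_sum_nat.norm).pow 2

lemma hasSum_of_tendsto_powerSeries_nhdsLT_one {b : ℕ → ℝ} {g : ℝ → ℝ} {L : ℝ} (hb : ∀ j, 0 ≤ b j)
    (hsum : ∀ y ∈ Set.Ioo (0 : ℝ) 1, HasSum (fun j ↦ b j * y ^ j) (g y))
    (hg : Tendsto g (𝓝[<] 1) (𝓝 L)) : HasSum b L := by
  have mem_Ioo : ∀ᶠ y : ℝ in 𝓝[<] 1, y ∈ Set.Ioo 0 1 := Ioo_mem_nhdsLT zero_lt_one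
  have sum_le (s : Finset ℕ) : ∑ j ∈ s, b j ≤ L := by
    have polynomial_tendsto :
        Tendsto (fun y : ℝ ↦ ∑ j ∈ s, b j * y ^ j) (𝓝[<] 1) (𝓝 (∑ j ∈ s, b j)) := by
      have : Continuous fun y : ℝ ↦ ∑ j ∈ s, b j * y ^ j := by fun_prop
      simpa using (this.tendsto 1).mono_left nhdsWithin_le_nhds
    refine le_of_tendsto_of_tendsto polynomial_tendsto hg (mem_Ioo.mono fun y hy ↦ ?_)
    exact sum_le_hasSum s (fun j _ ↦ mul_nonneg (hb j) (pow_nonneg hy.1.le j)) (hsum y hy)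
  have summable_b : Summable b := summable_of_sum_le hb sum_le
  have abel : Tendsto (fun y ↦ ∑' j, b j * y ^ j) (𝓝[<] 1) (𝓝 (∑' j, b j)) :=
    tendsto_tsum_powerSeries_nhdsWithin_lt summable_b.hasSum.tendsto_sum_nat
  have tsum_eq : ∑' j, b j = L :=
    tendsto_nhds_unique (abel.congr' (mem_Ioo.mono fun y hy ↦ (hsum y hy).tsum_eq)) hg
  exact tsum_eq ▸ summable_b.hasSum

lemma gbinom_eq_choose (r : ℝ) (j : ℕ) : gbinom r j = Ring.choose r j := by
  rw [gbinom, Ring.choose_eq_smul, ← Polynomial.aeval_eq_smeval, Polynomial.aeval_def,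
    Polynomial.eval₂_eq_eval_map, descPochhammer_map, descPochhammer_eval_eq_prod_range,
    smul_eq_mul, div_eq_inv_mul]

lemma hasSum_gbinom_mul_pow (a : ℝ) {z : ℂ} (hz : ‖z‖ < 1) :
    HasSum (fun j ↦ (gbinom a j : ℂ) * z ^ j) ((1 + z) ^ (a : ℂ)) := by
  have mem_eball : z ∈ eball (0 : ℂ) 1 := by
    rwa [mem_eball_zero_iff, ← ofReal_norm, ENNReal.ofReal_lt_one]
  simpa [gbinom_eq_choose, Complex.ofReal_choose, binomialSeries, mul_comm] using
    (Complex.one_add_cpow_hasFPowerSeriesOnBall_zero (a := a)).hasSum mem_eball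

lemma hasSum_sq_gbinom_mul_pow_of_abs_lt_one (p : ℝ) {x : ℝ} (hx : |x| < 1) :
    HasSum (fun j ↦ gbinom (p / 2) j ^ 2 * x ^ (2 * j))
      (circleAverage (fun z ↦ ‖1 + z‖ ^ p) 0 x) := by
  have summable_norm : Summable fun j ↦ ‖(gbinom (p / 2) j : ℂ)‖ * |x| ^ j := by
    have norm_x : ‖(x : ℂ)‖ < 1 := by simpa using hx
    simpa using (hasSum_gbinom_mul_pow (p / 2) norm_x).summable.norm
  have parseval := hasSum_sq_norm_mul_pow_circleAverage summable_norm fun z hz ↦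
    hasSum_gbinom_mul_pow (p / 2) (by rwa [mem_sphere_zero_iff_norm.1 hz])
  have sq_norm_cpow (z : ℂ) : ‖(1 + z) ^ ((p / 2 : ℝ) : ℂ)‖ ^ 2 = ‖1 + z‖ ^ p := by
    rw [Complex.norm_cpow_real, ← rpow_mul_natCast (norm_nonneg _)]
    norm_num
  simpa only [sq_norm_cpow, Complex.norm_real, norm_eq_abs, sq_abs] using parseval

lemma hasSum_sq_gbinom {p : ℝ} (hp : 0 ≤ p) :
    HasSum (fun j ↦ gbinom (p / 2) j ^ 2) (circleAverage (fun z ↦ ‖1 + z‖ ^ p) 0 1) := by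
  have continuous_norm_rpow : Continuous fun z : ℂ ↦ ‖1 + z‖ ^ p :=
    Continuous.rpow_const (by fun_prop) fun _ ↦ .inr hp
  have continuous_average : Continuous fun y ↦ circleAverage (fun z ↦ ‖1 + z‖ ^ p) 0 (√y) :=
    continuous_norm_rpow.circleAverage.comp continuous_sqrt
  refine hasSum_of_tendsto_powerSeries_nhdsLT_one (fun j ↦ sq_nonneg _) (fun y hy ↦ ?_)
    (by simpa using (continuous_average.tendsto 1).mono_left nhdsWithin_le_nhds)
  have abs_sqrt_lt_one : |√y| < 1 := by
    rw [abs_of_nonneg (sqrt_nonneg y), sqrt_lt' one_pos, one_pow]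
    exact hy.2
  simpa only [pow_mul, sq_sqrt hy.1.le] using
    hasSum_sq_gbinom_mul_pow_of_abs_lt_one p abs_sqrt_lt_one

lemma circleAverage_norm_one_add_rpow (p x : ℝ) :
    circleAverage (fun z ↦ ‖1 + z‖ ^ p) 0 x =
      (1 / (2 * π)) * ∫ θ in 0..2 * π, (1 + 2 * x * cos θ + x ^ 2) ^ (p / 2) := by
  have sq_norm (θ : ℝ) : ‖1 + circleMap 0 x θ‖ ^ 2 = 1 + 2 * x * cos θ + x ^ 2 := by
    rw [← Complex.normSq_eq_norm_sq, Complex.normSq_apply]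
    simp [circleMap, Complex.exp_ofReal_mul_I_re, Complex.exp_ofReal_mul_I_im]
    linear_combination x ^ 2 * sin_sq_add_cos_sq θ
  simp only [circleAverage_def, smul_eq_mul, one_div, ← sq_norm,
    ← rpow_natCast_mul (norm_nonneg _), Nat.cast_ofNat, mul_div_cancel₀ p two_ne_zero]

theorem stmt1_general {p : ℝ} (hp : 0 ≤ p) {x : ℝ} (hx : |x| ≤ 1) :
    HasSum (fun j ↦ gbinom (p / 2) j ^ 2 * x ^ (2 * j))
      ((1 / (2 * π)) * ∫ θ in 0..2 * π, (1 + 2 * x * cos θ + x ^ 2) ^ (p / 2)) := by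
  rw [← circleAverage_norm_one_add_rpow]
  rcases hx.lt_or_eq with hlt | habs
  · exact hasSum_sq_gbinom_mul_pow_of_abs_lt_one p hlt
  · have sq_eq_one : x ^ 2 = 1 := by rw [← sq_abs, habs, one_pow]
    rw [← circleAverage_abs_radius, habs]
    simpa only [pow_mul, sq_eq_one, one_pow, mul_one] using hasSum_sq_gbinom hp

theorem stmt1 (p : ℝ) (hp : 1 ≤ p) (x : ℝ) (hx : x ∈ Set.Icc (0:ℝ) 1) :
    (1 / (2 * π)) * (∫ θ in (0:ℝ)..(2 * π), (1 + 2 * x * Real.cos θ + x ^ 2) ^ (p / 2))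
      = ∑' j : ℕ, gbinom (p / 2) j ^ 2 * x ^ (2 * j) :=
  (stmt1_general (by linarith) (abs_le.2 ⟨by linarith [hx.1], hx.2⟩)).tsum_eq.symm
end

section
/- Define P(x) = (1+2x)^{28}(1 + 4x + x^2)^3 and Q(x) = (1+2x)^{32} F(√x (2+x)/(1+2x))^4 where F(y) = 1 + y^2/4 + y^4/64 + y^6/256 + (5/768) y^8. Then for all x in [0,1], P(0)/Q(0) ≤ P(x)/Q(x) ≤ P(1)/Q(1); i.e., 1 ≤ P(x)/Q(x) ≤ P(1)/Q(1). -/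
/-- `F(y) = 1 + y²/4 + y⁴/64 + y⁶/256 + (5/768)y⁸`. -/
noncomputable def F (y : ℝ) : ℝ :=
  1 + y ^ 2 / 4 + y ^ 4 / 64 + y ^ 6 / 256 + (5/768) * y ^ 8

/-- `P(x) = (1+2x)²⁸ (1+4x+x²)³`. -/
noncomputable def Pf (x : ℝ) : ℝ := (1 + 2 * x) ^ 28 * (1 + 4 * x + x ^ 2) ^ 3

/-- `Q(x) = (1+2x)³² F(√x(2+x)/(1+2x))⁴`. -/
noncomputable def Qf (x : ℝ) : ℝ :=
  (1 + 2 * x) ^ 32 * (F (Real.sqrt x * (2 + x) / (1 + 2 * x))) ^ 4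

/-!
Write `A = 1 + 4x + x²`, `u = 1 + 2x`, `z = x(2 + x)²/u²` and `F(y) = f(y²)`, so that
`P/Q = (A³/u⁴) / f(z)⁴`. The derivatives of `log (A³/u⁴)` and of `z` share the factor
`2 - x + 2x²`, hence `P/Q` increases as soon as `2A(2 + x) f'(z) ≤ u² f(z)`. As
`2A(2 + x) = 4u² + 2x(1 - x)²`, this compares `f - 4f'`, which is divisible by `z(1 - z)` thanks to
the coefficient `5/768`, with a term carrying the factor `x(1 - x)²`; and `u²(1 - z) = 1 - x³`.
-/

open Set

section DivPow

variable {s : Set ℝ} {g h g' h' : ℝ → ℝ} {n : ℕ}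

lemma monotoneOn_div_pow_of_mul_deriv_le (hs : Convex ℝ s)
    (hg : ∀ x ∈ s, HasDerivWithinAt g (g' x) s x) (hh : ∀ x ∈ s, HasDerivWithinAt h (h' x) s x)
    (hpos : ∀ x ∈ s, 0 < h x) (hle : ∀ x ∈ interior s, n * (g x * h' x) ≤ g' x * h x) :
    MonotoneOn (fun x => g x / h x ^ n) s := by
  have hderiv (x : ℝ) (hx : x ∈ s) : HasDerivWithinAt (fun x => g x / h x ^ n)
      ((g' x * h x - n * (g x * h' x)) / h x ^ (n + 1)) s x := by
    have hne := (hpos x hx).ne'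
    refine ((hg x hx).fun_div ((hh x hx).fun_pow n) (pow_ne_zero n hne)).congr_deriv ?_
    cases n with
    | zero => simp [hne]
    | succ k =>
      rw [Nat.add_sub_cancel]
      field_simp
      ring
  refine monotoneOn_of_hasDerivWithinAt_nonneg hs
    (fun x hx => (hderiv x hx).continuousWithinAt)
    (fun x hx => (hderiv x (interior_subset hx)).mono interior_subset) fun x hx => ?_
  exact div_nonneg (sub_nonneg.2 (hle x hx)) (pow_pos (hpos x (interior_subset hx)) _).le

end DivPow

/-- The polynomial `f` with `F y = f (y²)`; it removes the square root from `Qf`. -/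
noncomputable def FSq (z : ℝ) : ℝ :=
  1 + z / 4 + z ^ 2 / 64 + z ^ 3 / 256 + (5 / 768) * z ^ 4

/-- The square of the argument `√x (2 + x) / (1 + 2x)` at which `Qf` evaluates `F`, as a rational
function of `x`. For `x < 0` they differ in general, as `√x = 0` there. -/
noncomputable def argSq (x : ℝ) : ℝ := x * (2 + x) ^ 2 / (1 + 2 * x) ^ 2

/-- The quotient `Pf x / (1 + 2x)³²` in lowest terms, that is, the numerator that remains when the
factor `(1 + 2x)³²` of `Qf x` is cancelled. -/
noncomputable def reducedPf (x : ℝ) : ℝ := (1 + 4 * x + x ^ 2) ^ 3 / (1 + 2 * x) ^ 4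

section FSq

variable {z : ℝ}

lemma F_eq_FSq_sq (y : ℝ) : F y = FSq (y ^ 2) := by
  unfold F FSq
  ring

lemma FSq_pos (hz : 0 ≤ z) : 0 < FSq z := by
  unfold FSq
  positivity

lemma differentiable_FSq : Differentiable ℝ FSq := by
  unfold FSq
  fun_prop

lemma deriv_FSq (z : ℝ) :
    deriv FSq z = (192 + 24 * z + 9 * z ^ 2 + 20 * z ^ 3) / 768 := by
  have h := (((((hasDerivAt_id z).div_const 4).const_add 1).fun_add
    ((hasDerivAt_pow 2 z).div_const 64)).fun_add ((hasDerivAt_pow 3 z).div_const 256)).fun_add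
    ((hasDerivAt_pow 4 z).const_mul (5 / 768))
  refine HasDerivAt.deriv (h.congr_deriv ?_)
  norm_num only
  ring

lemma FSq_sub_four_mul_deriv_FSq (z : ℝ) :
    FSq z - 4 * deriv FSq z = z * (1 - z) * (96 + 72 * z - 5 * z ^ 2) / 768 := by
  rw [deriv_FSq, FSq]
  ring

lemma deriv_FSq_le (h0 : 0 ≤ z) (h1 : z ≤ 1) : deriv FSq z ≤ (192 + 53 * z) / 768 := by
  have h2 : z ^ 2 ≤ z := pow_le_of_le_one h0 h1 two_ne_zero
  have h3 : z ^ 3 ≤ z := pow_le_of_le_one h0 h1 three_ne_zero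
  rw [deriv_FSq]
  linarith

lemma mul_le_FSq_sub_four_mul_deriv_FSq (h0 : 0 ≤ z) (h1 : z ≤ 1) :
    z * (1 - z) * (96 + 67 * z) / 768 ≤ FSq z - 4 * deriv FSq z := by
  have h2 : z ^ 2 ≤ z := pow_le_of_le_one h0 h1 two_ne_zero
  have h3 : 0 ≤ z * (1 - z) := mul_nonneg h0 (sub_nonneg.2 h1)
  rw [FSq_sub_four_mul_deriv_FSq]
  have hq : 96 + 67 * z ≤ 96 + 72 * z - 5 * z ^ 2 := by linarith
  exact div_le_div_of_nonneg_right (mul_le_mul_of_nonneg_left hq h3) (by norm_num)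

end FSq

section RationalFunctions

variable {x : ℝ}

lemma sq_sqrt_mul_div (hx : 0 ≤ x) : (√x * (2 + x) / (1 + 2 * x)) ^ 2 = argSq x := by
  rw [argSq, div_pow, mul_pow, Real.sq_sqrt hx]

lemma Pf_div_Qf (hx : 0 ≤ x) : Pf x / Qf x = reducedPf x / FSq (argSq x) ^ 4 := by
  have hu : 1 + 2 * x ≠ 0 := by positivity
  rw [Pf, Qf, reducedPf, F_eq_FSq_sq, sq_sqrt_mul_div hx]
  field_simp

lemma argSq_nonneg (hx : 0 ≤ x) : 0 ≤ argSq x := by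
  unfold argSq
  positivity

lemma sq_mul_argSq (hx : 1 + 2 * x ≠ 0) : (1 + 2 * x) ^ 2 * argSq x = x * (2 + x) ^ 2 :=
  mul_div_cancel₀ _ (pow_ne_zero 2 hx)

lemma sq_mul_one_sub_argSq (hx : 1 + 2 * x ≠ 0) :
    (1 + 2 * x) ^ 2 * (1 - argSq x) = 1 - x ^ 3 := by
  linear_combination -sq_mul_argSq hx

lemma argSq_le_one (h0 : 0 ≤ x) (h1 : x ≤ 1) : argSq x ≤ 1 := by
  have hu : 0 < 1 + 2 * x := by positivity
  have h : 0 ≤ (1 + 2 * x) ^ 2 * (1 - argSq x) := by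
    rw [sq_mul_one_sub_argSq hu.ne']
    exact sub_nonneg.2 (pow_le_one₀ h0 h1)
  exact sub_nonneg.1 (nonneg_of_mul_nonneg_right h (pow_pos hu 2))

lemma hasDerivAt_one_add_two_mul (x : ℝ) : HasDerivAt (fun x : ℝ => 1 + 2 * x) 2 x := by
  simpa using ((hasDerivAt_id x).const_mul 2).const_add 1

lemma hasDerivAt_argSq (hx : 1 + 2 * x ≠ 0) :
    HasDerivAt argSq ((2 + x) * (2 - x + 2 * x ^ 2) / (1 + 2 * x) ^ 3) x := by
  have hnum := (hasDerivAt_id' x).fun_mul (((hasDerivAt_id' x).const_add 2).fun_pow 2)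
  have hden := (hasDerivAt_one_add_two_mul x).fun_pow 2
  refine (hnum.fun_div hden (pow_ne_zero 2 hx)).congr_deriv ?_
  field_simp
  ring

lemma hasDerivAt_reducedPf (hx : 1 + 2 * x ≠ 0) :
    HasDerivAt reducedPf
      (2 * (2 - x + 2 * x ^ 2) * (1 + 4 * x + x ^ 2) ^ 2 / (1 + 2 * x) ^ 5) x := by
  have hnum : HasDerivAt (fun x : ℝ => 1 + 4 * x + x ^ 2) (4 + 2 * x) x := by
    simpa using (((hasDerivAt_id x).const_mul 4).const_add 1).fun_add (hasDerivAt_pow 2 x)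
  have hden := (hasDerivAt_one_add_two_mul x).fun_pow 4
  refine ((hnum.fun_pow 3).fun_div hden (pow_ne_zero 4 hx)).congr_deriv ?_
  norm_num only
  field_simp
  ring

-- What `mul_deriv_FSq_argSq_le` becomes once `f'` and `f - 4f'` are replaced by their bounds
-- above, in which `192 + 53z` and `96 + 67z` appear, and `x(1 - x)` is cancelled.
lemma one_sub_mul_linear_argSq_le (hx : 0 ≤ x) :
    2 * (1 - x) * (1 + 2 * x) ^ 2 * (192 + 53 * argSq x) ≤
      (2 + x) ^ 2 * (1 + x + x ^ 2) * (96 + 67 * argSq x) := by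
  have hu : 0 < 1 + 2 * x := by positivity
  have hdiff : (1 + 2 * x) ^ 2 * ((2 + x) ^ 2 * (1 + x + x ^ 2) * (96 + 67 * argSq x) -
      2 * (1 - x) * (1 + 2 * x) ^ 2 * (192 + 53 * argSq x)) =
      x * (264 + 848 * x + 7382 * x ^ 2 + 17282 * x ^ 3 + 12355 * x ^ 4 + 1411 * x ^ 5
        + 67 * x ^ 6) := by
    linear_combination (67 * (2 + x) ^ 2 * (1 + x + x ^ 2) -
      106 * (1 - x) * (1 + 2 * x) ^ 2) * sq_mul_argSq hu.ne'
  refine sub_nonneg.1 (nonneg_of_mul_nonneg_right ?_ (pow_pos hu 2))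
  rw [hdiff]
  positivity

lemma mul_deriv_FSq_argSq_le (h0 : 0 ≤ x) (h1 : x ≤ 1) :
    2 * (1 + 4 * x + x ^ 2) * (2 + x) * deriv FSq (argSq x) ≤
      (1 + 2 * x) ^ 2 * FSq (argSq x) := by
  have hu : 0 < 1 + 2 * x := by positivity
  have hz0 := argSq_nonneg h0
  have hz1 := argSq_le_one h0 h1
  suffices h : 2 * x * (1 - x) ^ 2 * deriv FSq (argSq x) ≤
      (1 + 2 * x) ^ 2 * (FSq (argSq x) - 4 * deriv FSq (argSq x)) by
    have hsplit : 2 * (1 + 4 * x + x ^ 2) * (2 + x) =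
        4 * (1 + 2 * x) ^ 2 + 2 * x * (1 - x) ^ 2 := by ring
    rw [hsplit]
    linarith only [h]
  refine le_of_mul_le_mul_left ?_ (pow_pos hu 2)
  calc (1 + 2 * x) ^ 2 * (2 * x * (1 - x) ^ 2 * deriv FSq (argSq x))
      ≤ (1 + 2 * x) ^ 2 * (2 * x * (1 - x) ^ 2 * ((192 + 53 * argSq x) / 768)) := by
        gcongr
        exact deriv_FSq_le hz0 hz1
    _ = x * (1 - x) / 768 * (2 * (1 - x) * (1 + 2 * x) ^ 2 * (192 + 53 * argSq x)) := by ring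
    _ ≤ x * (1 - x) / 768 * ((2 + x) ^ 2 * (1 + x + x ^ 2) * (96 + 67 * argSq x)) :=
        mul_le_mul_of_nonneg_left (one_sub_mul_linear_argSq_le h0)
          (div_nonneg (mul_nonneg h0 (sub_nonneg.2 h1)) (by norm_num))
    _ = x * (2 + x) ^ 2 * (1 - x ^ 3) * (96 + 67 * argSq x) / 768 := by ring
    _ = (1 + 2 * x) ^ 2 * ((1 + 2 * x) ^ 2 *
          (argSq x * (1 - argSq x) * (96 + 67 * argSq x) / 768)) := by
        rw [← sq_mul_argSq hu.ne', ← sq_mul_one_sub_argSq hu.ne']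
        ring
    _ ≤ (1 + 2 * x) ^ 2 * ((1 + 2 * x) ^ 2 *
          (FSq (argSq x) - 4 * deriv FSq (argSq x))) := by
        gcongr
        exact mul_le_FSq_sub_four_mul_deriv_FSq hz0 hz1

lemma four_mul_reducedPf_mul_deriv_le (h0 : 0 ≤ x) (h1 : x ≤ 1) :
    4 * (reducedPf x *
        (deriv FSq (argSq x) * ((2 + x) * (2 - x + 2 * x ^ 2) / (1 + 2 * x) ^ 3))) ≤
      2 * (2 - x + 2 * x ^ 2) * (1 + 4 * x + x ^ 2) ^ 2 / (1 + 2 * x) ^ 5 * FSq (argSq x) := by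
  have hw : 0 ≤ 2 - x + 2 * x ^ 2 := by linarith [sq_nonneg x]
  set c : ℝ := 2 * (2 - x + 2 * x ^ 2) * (1 + 4 * x + x ^ 2) ^ 2 / (1 + 2 * x) ^ 7 with hc
  have hc0 : 0 ≤ c := div_nonneg (mul_nonneg (mul_nonneg zero_le_two hw) (sq_nonneg _))
    (by positivity)
  calc _ = c * (2 * (1 + 4 * x + x ^ 2) * (2 + x) * deriv FSq (argSq x)) := by
        rw [hc, reducedPf]
        field_simp
        ring
    _ ≤ c * ((1 + 2 * x) ^ 2 * FSq (argSq x)) :=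
        mul_le_mul_of_nonneg_left (mul_deriv_FSq_argSq_le h0 h1) hc0
    _ = _ := by
        rw [hc]
        field_simp

end RationalFunctions

theorem monotoneOn_Pf_div_Qf : MonotoneOn (fun x => Pf x / Qf x) (Icc 0 1) := by
  have hu (x : ℝ) (hx : x ∈ Icc (0 : ℝ) 1) : 1 + 2 * x ≠ 0 :=
    ne_of_gt (by linarith [hx.1])
  have hnum (x : ℝ) (hx : x ∈ Icc (0 : ℝ) 1) :=
    (hasDerivAt_reducedPf (hu x hx)).hasDerivWithinAt (s := Icc 0 1)
  have hden (x : ℝ) (hx : x ∈ Icc (0 : ℝ) 1) :=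
    ((differentiable_FSq _).hasDerivAt.comp x
      (hasDerivAt_argSq (hu x hx))).hasDerivWithinAt (s := Icc 0 1)
  have hmono : MonotoneOn (fun x => reducedPf x / FSq (argSq x) ^ 4) (Icc 0 1) := by
    refine monotoneOn_div_pow_of_mul_deriv_le (convex_Icc 0 1) hnum hden
      (fun x hx => FSq_pos (argSq_nonneg hx.1)) fun x hx => ?_
    obtain ⟨h0, h1⟩ := interior_subset hx
    exact_mod_cast four_mul_reducedPf_mul_deriv_le h0 h1
  exact hmono.congr fun x hx => (Pf_div_Qf hx.1).symm

lemma Pf_zero_div_Qf_zero : Pf 0 / Qf 0 = 1 := by simp [Pf, Qf, F]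

theorem stmt11 (x : ℝ) (hx : x ∈ Set.Icc (0:ℝ) 1) :
    (Pf 0 / Qf 0 ≤ Pf x / Qf x ∧ Pf x / Qf x ≤ Pf 1 / Qf 1) ∧
    1 ≤ Pf x / Qf x := by
  have hzero : Pf 0 / Qf 0 ≤ Pf x / Qf x :=
    monotoneOn_Pf_div_Qf (left_mem_Icc.2 zero_le_one) hx hx.1
  have hone : Pf x / Qf x ≤ Pf 1 / Qf 1 :=
    monotoneOn_Pf_div_Qf hx (right_mem_Icc.2 zero_le_one) hx.2
  exact ⟨⟨hzero, hone⟩, Pf_zero_div_Qf_zero.symm.trans_le hzero⟩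
end
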